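/- (Example Erock: the limit distribution depends on the unrestricted player's strategy.) One has E[(max(0, Z_2 − Z_1, Z_3 − Z_1))³] > E[(W + max(Z_1, Z_2, Z_3))³]. In particular, the random variables −Z_1 + max(Z_1,Z_2,Z_3) = max(0, Z_2 − Z_1, Z_3 − Z_1) and W + max(Z_1,Z_2,Z_3) have different distributions, even though −Z_1 and W have the same distribution N(0,2). -/

import Mathlib

open MeasureTheory ProbabilityTheory Real Filter
open scoped ENNReal Topology

/-! Write `Z = (Z₁, Z₂, Z₃)`, `M = max Zᵢ` and `D = Z₁ - Z₂`. The coordinates of `Z` are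
exchangeable and sum to zero, so `E[M² Z₁] = 0`; since `-Z₁` and `W` have the same law, the third
moments of `M - Z₁` and `M + W` differ only through their terms `3 E[M Z₁²]` and `3 E[M] E[Z₁²]`,
that is by `3 Cov(M, Z₁²) = Cov(M, |Z|²)`. The symmetry `Z ↦ -Z` replaces `M` by half the range of
`Z`, which equals `¼ ∑ |Zᵢ - Zⱼ|` over the three pairs, so this covariance is `¾ Cov(|D|, |Z|²)`.
Finally `|Z|² = ½ D² + (3/2) Z₃²` with `Z₃` independent of `D`, which leaves `(3/8) Cov(|D|, D²)`.
This is positive because `Cov(Y, Y²) ≥ E[Y] Var[Y]` for every `Y ≥ 0`. -/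

section Moments

variable {Ω : Type*} [MeasurableSpace Ω] {P : Measure Ω} {U V W X Y : Ω → ℝ}

lemma integrable_mul_mul_of_memLp_three (hU : MemLp U 3 P) (hV : MemLp V 3 P) (hW : MemLp W 3 P) :
    Integrable (fun ω => U ω * V ω * W ω) P := by
  have hprod := MemLp.prod' (s := Finset.univ) (f := ![U, V, W]) (p := fun _ => 3) (μ := P)
    (by simp [Fin.forall_fin_succ, hU, hV, hW])
  have hexp : (∑ _i : Fin 3, (3 : ℝ≥0∞)⁻¹)⁻¹ = 1 := by
    simp [ENNReal.mul_inv_cancel]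
  rw [hexp, memLp_one_iff_integrable] at hprod
  simpa [Fin.prod_univ_three] using hprod

lemma memLp_sq_of_memLp_four (hX : MemLp X 4 P) : MemLp (fun ω => X ω ^ 2) 2 P := by
  refine (memLp_two_iff_integrable_sq (hX.1.pow 2)).2 ?_
  simpa [← pow_mul, Even.pow_abs (by decide : Even 4)] using
    hX.integrable_norm_pow (p := 4) (by norm_num)

lemma integral_add_pow_three (hU : MemLp U 3 P) (hV : MemLp V 3 P) :
    ∫ ω, (U ω + V ω) ^ 3 ∂P = ∫ ω, U ω ^ 3 ∂P + 3 * ∫ ω, U ω ^ 2 * V ω ∂P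
      + 3 * ∫ ω, U ω * V ω ^ 2 ∂P + ∫ ω, V ω ^ 3 ∂P := by
  have hUUU : Integrable (fun ω => U ω ^ 3) P := by
    simpa only [pow_three'] using integrable_mul_mul_of_memLp_three hU hU hU
  have hUUV : Integrable (fun ω => 3 * (U ω ^ 2 * V ω)) P := by
    simpa only [sq] using (integrable_mul_mul_of_memLp_three hU hU hV).const_mul 3
  have hUVV : Integrable (fun ω => 3 * (U ω * V ω ^ 2)) P := by
    simpa only [sq, mul_assoc] using (integrable_mul_mul_of_memLp_three hU hV hV).const_mul 3
  have hVVV : Integrable (fun ω => V ω ^ 3) P := by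
    simpa only [pow_three'] using integrable_mul_mul_of_memLp_three hV hV hV
  calc ∫ ω, (U ω + V ω) ^ 3 ∂P
      = ∫ ω, (U ω ^ 3 + 3 * (U ω ^ 2 * V ω) + 3 * (U ω * V ω ^ 2) + V ω ^ 3) ∂P := by
        congr 1 with ω; ring
    _ = _ := by
        rw [integral_add ((hUUU.fun_add hUUV).fun_add hUVV) hVVV,
          integral_add (hUUU.fun_add hUUV) hUVV,
          integral_add hUUU hUUV, integral_const_mul, integral_const_mul]

lemma integral_add_pow_three_sub_integral_add_pow_three [IsProbabilityMeasure P]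
    (hU : MemLp U 4 P) (hV : MemLp V 4 P) (hVW : IdentDistrib V W P P) (hindep : IndepFun W U P)
    (hW : P[W] = 0) (hUV : ∫ ω, U ω ^ 2 * V ω ∂P = 0) :
    ∫ ω, (U ω + V ω) ^ 3 ∂P - ∫ ω, (W ω + U ω) ^ 3 ∂P = 3 * cov[U, fun ω => V ω ^ 2; P] := by
  have hWL : MemLp W 4 P := hVW.memLp_snd hV
  have hUUW : ∫ ω, U ω ^ 2 * W ω ∂P = 0 := by
    rw [hindep.symm.integral_fun_comp_mul_comp (f := fun x => x ^ 2) (g := fun x => x)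
      hU.1.aemeasurable hWL.1.aemeasurable (by fun_prop) (by fun_prop), hW, mul_zero]
  have hUWW : ∫ ω, U ω * W ω ^ 2 ∂P = P[U] * ∫ ω, V ω ^ 2 ∂P := by
    rw [hVW.sq.integral_eq]
    exact hindep.symm.integral_fun_comp_mul_comp (f := fun x => x) (g := fun x => x ^ 2)
      hU.1.aemeasurable hWL.1.aemeasurable (by fun_prop) (by fun_prop)
  have h34 : (3 : ℝ≥0∞) ≤ 4 := by norm_num
  have h24 : (2 : ℝ≥0∞) ≤ 4 := by norm_num
  simp only [add_comm (W _)]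
  rw [integral_add_pow_three (hU.mono_exponent h34) (hV.mono_exponent h34),
    integral_add_pow_three (hU.mono_exponent h34) (hWL.mono_exponent h34), hUV, hUUW, hUWW,
    hVW.pow.integral_eq, covariance_eq_sub (hU.mono_exponent h24) (memLp_sq_of_memLp_four hV)]
  simp only [Pi.mul_apply]
  ring

lemma integral_mul_variance_le_covariance_sq [IsProbabilityMeasure P] (hY : MemLp Y 3 P)
    (hY0 : 0 ≤ᵐ[P] Y) : P[Y] * Var[Y; P] ≤ cov[Y, fun ω => Y ω ^ 2; P] := by
  -- `Cov(Y, Y²) = E[(Y - m)² (Y + m)]`, since `Y² - q` and `Y² - m²` differ by a constant.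
  set m := P[Y]
  set q := ∫ ω, Y ω ^ 2 ∂P
  have hY2 : MemLp Y 2 P := hY.mono_exponent (by norm_num)
  have hYc : MemLp (fun ω => Y ω - m) 3 P := hY.sub (memLp_const m)
  have hYint : Integrable (fun ω => (m ^ 2 - q) * (Y ω - m)) P :=
    (hYc.integrable (by norm_num)).const_mul _
  have hcube : Integrable (fun ω => (Y ω - m) * (Y ω - m) * (Y ω + m)) P :=
    integrable_mul_mul_of_memLp_three hYc hYc (hY.add (memLp_const m))
  have hsq : Integrable (fun ω => m * (Y ω - m) ^ 2) P :=
    (hYc.mono_exponent (by norm_num : (2 : ℝ≥0∞) ≤ 3)).integrable_sq.const_mul m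
  have hcentred : ∫ ω, (m ^ 2 - q) * (Y ω - m) ∂P = 0 := by
    rw [integral_const_mul, integral_sub (hY2.integrable (by norm_num)) (integrable_const m)]
    simp [m]
  calc m * Var[Y; P]
      = ∫ ω, (m * (Y ω - m) ^ 2) ∂P := by
        rw [integral_const_mul, variance_eq_integral hY.1.aemeasurable]
    _ ≤ ∫ ω, (Y ω - m) * (Y ω - m) * (Y ω + m) ∂P := by
        refine integral_mono_ae hsq hcube ?_
        filter_upwards [hY0] with ω hω
        have : 0 ≤ (Y ω - m) ^ 2 * Y ω := mul_nonneg (sq_nonneg _) hω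
        linarith
    _ = ∫ ω, ((Y ω - m) * (Y ω - m) * (Y ω + m) + (m ^ 2 - q) * (Y ω - m)) ∂P := by
        rw [integral_add hcube hYint, hcentred, add_zero]
    _ = cov[Y, fun ω => Y ω ^ 2; P] := by
        rw [covariance]; congr 1 with ω; ring

lemma covariance_abs_sq_pos [IsProbabilityMeasure P] (hX : MemLp X 3 P)
    (hvar : Var[fun ω => |X ω|; P] ≠ 0) :
    0 < cov[fun ω => |X ω|, fun ω => X ω ^ 2; P] := by
  have hnonneg : 0 ≤ᵐ[P] fun ω => |X ω| := ae_of_all _ fun ω => abs_nonneg _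
  have hmean : P[fun ω => |X ω|] ≠ 0 := fun h => hvar <| by
    rw [integral_eq_zero_iff_of_nonneg_ae hnonneg (hX.abs.integrable (by norm_num))] at h
    rw [variance_congr h, variance_zero]
  have hpos : 0 < P[fun ω => |X ω|] * Var[fun ω => |X ω|; P] :=
    mul_pos ((integral_nonneg_of_ae hnonneg).lt_of_ne' hmean) ((variance_nonneg _ _).lt_of_ne' hvar)
  simpa only [sq_abs] using hpos.trans_le (integral_mul_variance_le_covariance_sq hX.abs hnonneg)

lemma variance_abs_ne_zero [IsProbabilityMeasure P] [NullSingletonClass (P.map X)]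
    (hX : MemLp X 2 P) : Var[fun ω => |X ω|; P] ≠ 0 := by
  intro hvar
  set m := P[fun ω => |X ω|]
  have hae : ∀ᵐ ω ∂P, X ω ∈ ({m, -m} : Set ℝ) := by
    filter_upwards [ae_eq_integral_of_variance_eq_zero hX.abs hvar] with ω hω
    exact eq_or_eq_neg_of_abs_eq hω
  have hnull : ∀ᵐ ω ∂P, X ω ∉ ({m, -m} : Set ℝ) :=
    ae_of_ae_map hX.1.aemeasurable (compl_mem_ae_iff.2 ((Set.toFinite _).measure_zero _))
  obtain ⟨ω, h, h'⟩ := (hae.and hnull).exists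
  exact h' h

end Moments

section Covariance

variable {Ω Ω' 𝓧 : Type*} [MeasurableSpace Ω] [MeasurableSpace Ω'] [MeasurableSpace 𝓧]
  {P : Measure Ω} {P' : Measure Ω'} {X Y Z : Ω → ℝ}

lemma covariance_fun_add_left [IsFiniteMeasure P] (hX : MemLp X 2 P) (hY : MemLp Y 2 P)
    (hZ : MemLp Z 2 P) : cov[fun ω => X ω + Y ω, Z; P] = cov[X, Z; P] + cov[Y, Z; P] :=
  covariance_add_left hX hY hZ

lemma covariance_fun_add_right [IsFiniteMeasure P] (hX : MemLp X 2 P) (hY : MemLp Y 2 P)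
    (hZ : MemLp Z 2 P) : cov[X, fun ω => Y ω + Z ω; P] = cov[X, Y; P] + cov[X, Z; P] :=
  covariance_add_right hX hY hZ

lemma covariance_congr_right (h : Y =ᵐ[P] Z) : cov[X, Y; P] = cov[X, Z; P] := by
  rw [covariance, covariance, integral_congr_ae h]
  refine integral_congr_ae ?_
  filter_upwards [h] with ω hω
  rw [hω]

lemma covariance_comp_eq_of_identDistrib {X : Ω → 𝓧} {Y : Ω' → 𝓧} (h : IdentDistrib X Y P P')
    {f g : 𝓧 → ℝ} (hf : Measurable f) (hg : Measurable g) :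
    cov[fun ω => f (X ω), fun ω => g (X ω); P] = cov[fun ω => f (Y ω), fun ω => g (Y ω); P'] := by
  rw [← covariance_map_fun hf.aestronglyMeasurable hg.aestronglyMeasurable h.aemeasurable_fst,
    h.map_eq,
    covariance_map_fun hf.aestronglyMeasurable hg.aestronglyMeasurable h.aemeasurable_snd]

end Covariance

section Exchangeable

variable {Ω 𝓧 ι : Type*} [MeasurableSpace Ω] [MeasurableSpace 𝓧] {P : Measure Ω}

/-- The family of coordinates of `X` is exchangeable: permuting them does not change the joint
law. -/
def IsExchangeable (X : Ω → ι → 𝓧) (P : Measure Ω) : Prop :=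
  ∀ σ : Equiv.Perm ι, IdentDistrib (fun ω => X ω ∘ σ) X P P

namespace IsExchangeable

lemma identDistrib_prodMk {𝓨 : Type*} [MeasurableSpace 𝓨] {X : Ω → ι → 𝓧} {F : (ι → 𝓧) → 𝓨}
    (hX : IsExchangeable X P) (hF : Measurable F)
    (hsymm : ∀ (σ : Equiv.Perm ι) (x : ι → 𝓧), F (x ∘ σ) = F x) (i j : ι) :
    IdentDistrib (fun ω => (F (X ω), X ω i)) (fun ω => (F (X ω), X ω j)) P P := by
  classical
  have hswap : IdentDistrib (fun ω => (F (X ω ∘ Equiv.swap i j), (X ω ∘ Equiv.swap i j) j))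
      (fun ω => (F (X ω), X ω j)) P P :=
    (hX (Equiv.swap i j)).comp (u := fun x => (F x, x j)) (by fun_prop)
  simpa only [hsymm, Function.comp_apply, Equiv.swap_apply_right] using hswap

variable [Fintype ι]

lemma integral_mul_eq_zero {X : Ω → ι → ℝ} {F : (ι → ℝ) → ℝ} (hX : IsExchangeable X P)
    (hF : Measurable F) (hsymm : ∀ (σ : Equiv.Perm ι) (x : ι → ℝ), F (x ∘ σ) = F x)
    (hint : ∀ i, Integrable (fun ω => F (X ω) * X ω i) P) (hsum : ∀ᵐ ω ∂P, ∑ i, X ω i = 0)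
    (i : ι) : ∫ ω, F (X ω) * X ω i ∂P = 0 := by
  have heq (j : ι) : ∫ ω, F (X ω) * X ω j ∂P = ∫ ω, F (X ω) * X ω i ∂P :=
    ((hX.identDistrib_prodMk hF hsymm j i).comp (u := fun p : ℝ × ℝ => p.1 * p.2)
      (by fun_prop)).integral_eq
  have hzero : ∑ j, ∫ ω, F (X ω) * X ω j ∂P = 0 := by
    rw [← integral_finsetSum _ fun j _ => hint j]
    refine integral_eq_zero_of_ae ?_
    filter_upwards [hsum] with ω hω
    rw [← Finset.mul_sum, hω, mul_zero, Pi.zero_apply]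
  have : Nonempty ι := ⟨i⟩
  simpa [heq] using hzero

lemma card_mul_covariance {X : Ω → ι → 𝓧} {F : (ι → 𝓧) → ℝ} {g : 𝓧 → ℝ} [IsFiniteMeasure P]
    (hX : IsExchangeable X P) (hF : Measurable F)
    (hsymm : ∀ (σ : Equiv.Perm ι) (x : ι → 𝓧), F (x ∘ σ) = F x) (hg : Measurable g)
    (hFL : MemLp (fun ω => F (X ω)) 2 P) (hgL : ∀ i, MemLp (fun ω => g (X ω i)) 2 P) (i : ι) :
    Fintype.card ι * cov[fun ω => F (X ω), fun ω => g (X ω i); P]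
      = cov[fun ω => F (X ω), fun ω => ∑ j, g (X ω j); P] := by
  have heq (j : ι) : cov[fun ω => F (X ω), fun ω => g (X ω j); P]
      = cov[fun ω => F (X ω), fun ω => g (X ω i); P] :=
    covariance_comp_eq_of_identDistrib (hX.identDistrib_prodMk hF hsymm j i)
      (f := Prod.fst) (g := fun p => g p.2) (by fun_prop) (by fun_prop)
  simp [covariance_fun_sum_right hgL hFL, heq]

end IsExchangeable

end Exchangeable

section Supremum

lemma abs_ciSup_le_norm {ι : Type*} [Fintype ι] (x : ι → ℝ) : |⨆ i, x i| ≤ ‖x‖ := by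
  cases isEmpty_or_nonempty ι
  · simp
  · obtain ⟨i, hi⟩ := exists_eq_ciSup_of_finite (f := x)
    rw [← hi]
    exact norm_le_pi_norm x i

lemma memLp_ciSup {Ω ι : Type*} [MeasurableSpace Ω] {P : Measure Ω} [Fintype ι] {p : ℝ≥0∞}
    {X : Ω → ι → ℝ} (hX : MemLp X p P) : MemLp (fun ω => ⨆ i, X ω i) p P :=
  hX.mono ((Measurable.iSup measurable_pi_apply).comp_aemeasurable
    hX.1.aemeasurable).aestronglyMeasurable (ae_of_all _ fun ω => abs_ciSup_le_norm (X ω))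

lemma ciSup_fin_three {α : Type*} [ConditionallyCompleteLinearOrder α] (x : Fin 3 → α) :
    ⨆ i, x i = max (x 0) (max (x 1) (x 2)) := by
  rw [← Finset.sup'_univ_eq_ciSup]
  simp [Fin.univ_succ]

lemma ciSup_add_neg_zero (x : Fin 3 → ℝ) :
    (⨆ i, x i) + -x 0 = max 0 (max (x 1 - x 0) (x 2 - x 0)) := by
  rw [ciSup_fin_three, ← sub_eq_add_neg, ← max_sub_sub_right, ← max_sub_sub_right, sub_self]

lemma two_mul_ciSup_add_ciSup_neg (x : Fin 3 → ℝ) :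
    2 * ((⨆ i, x i) + ⨆ i, -x i) = |x 0 - x 1| + |x 2 - x 1| + |x 2 - x 0| := by
  simp only [ciSup_fin_three, max_def, abs_eq_max_neg]
  split_ifs <;> linarith

end Supremum

section ThreePoints

variable {Ω : Type*} [MeasurableSpace Ω] {P : Measure Ω} [IsFiniteMeasure P]
  {X : Ω → Fin 3 → ℝ}

lemma four_mul_covariance_ciSup {G : (Fin 3 → ℝ) → ℝ} (hX : IsExchangeable X P)
    (hneg : IdentDistrib (-X) X P P) (hL : MemLp X 2 P) (hG : Measurable G)
    (hsymm : ∀ (σ : Equiv.Perm (Fin 3)) (x : Fin 3 → ℝ), G (x ∘ σ) = G x)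
    (heven : ∀ x, G (-x) = G x) (hGL : MemLp (fun ω => G (X ω)) 2 P) :
    4 * cov[fun ω => ⨆ i, X ω i, fun ω => G (X ω); P]
      = 3 * cov[fun ω => |X ω 0 - X ω 1|, fun ω => G (X ω); P] := by
  have hLneg : MemLp (fun ω => ⨆ i, -X ω i) 2 P := memLp_ciSup hL.neg
  have hLabs (i j : Fin 3) : MemLp (fun ω => |X ω i - X ω j|) 2 P :=
    ((hL.eval i).sub (hL.eval j)).abs
  have hLadd : MemLp (fun ω => |X ω 0 - X ω 1| + |X ω 2 - X ω 1|) 2 P :=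
    (hLabs 0 1).add (hLabs 2 1)
  have hreflect : cov[fun ω => ⨆ i, -X ω i, fun ω => G (X ω); P]
      = cov[fun ω => ⨆ i, X ω i, fun ω => G (X ω); P] := by
    simpa only [Pi.neg_apply, heven] using covariance_comp_eq_of_identDistrib hneg
      (f := fun x => ⨆ i, x i) (Measurable.iSup measurable_pi_apply) hG
  have hpermute (σ : Equiv.Perm (Fin 3)) :
      cov[fun ω => |X ω (σ 0) - X ω (σ 1)|, fun ω => G (X ω); P]
        = cov[fun ω => |X ω 0 - X ω 1|, fun ω => G (X ω); P] := by
    simpa only [Function.comp_apply, hsymm] using covariance_comp_eq_of_identDistrib (hX σ)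
      (f := fun x => |x 0 - x 1|) (by fun_prop) hG
  have h21 : cov[fun ω => |X ω 2 - X ω 1|, fun ω => G (X ω); P]
      = cov[fun ω => |X ω 0 - X ω 1|, fun ω => G (X ω); P] := hpermute (Equiv.swap 0 2)
  have h20 : cov[fun ω => |X ω 2 - X ω 0|, fun ω => G (X ω); P]
      = cov[fun ω => |X ω 0 - X ω 1|, fun ω => G (X ω); P] := hpermute (finRotate 3).symm
  calc 4 * cov[fun ω => ⨆ i, X ω i, fun ω => G (X ω); P]
      = cov[fun ω => 2 * ((⨆ i, X ω i) + ⨆ i, -X ω i), fun ω => G (X ω); P] := by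
        rw [covariance_const_mul_left, covariance_fun_add_left (memLp_ciSup hL) hLneg hGL, hreflect]
        ring
    _ = cov[fun ω => |X ω 0 - X ω 1| + |X ω 2 - X ω 1| + |X ω 2 - X ω 0|,
          fun ω => G (X ω); P] := by
        simp only [two_mul_ciSup_add_ciSup_neg]
    _ = 3 * cov[fun ω => |X ω 0 - X ω 1|, fun ω => G (X ω); P] := by
        rw [covariance_fun_add_left hLadd (hLabs 2 0) hGL,
          covariance_fun_add_left (hLabs 0 1) (hLabs 2 1) hGL, h21, h20]
        ring

lemma two_mul_covariance_abs_sub_sum_sq (hL : MemLp X 4 P) (hsum : ∀ᵐ ω ∂P, ∑ i, X ω i = 0)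
    (hindep : IndepFun (fun ω => X ω 0 - X ω 1) (fun ω => X ω 2) P) :
    2 * cov[fun ω => |X ω 0 - X ω 1|, fun ω => ∑ i, X ω i ^ 2; P]
      = cov[fun ω => |X ω 0 - X ω 1|, fun ω => (X ω 0 - X ω 1) ^ 2; P] := by
  have hD : MemLp (fun ω => X ω 0 - X ω 1) 4 P := (hL.eval 0).sub (hL.eval 1)
  have habs : MemLp (fun ω => |X ω 0 - X ω 1|) 2 P := (hD.mono_exponent (by norm_num)).abs
  have hthird : MemLp (fun ω => 3 * X ω 2 ^ 2) 2 P :=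
    (memLp_sq_of_memLp_four (hL.eval 2)).const_mul 3
  have huncorr : cov[fun ω => |X ω 0 - X ω 1|, fun ω => 3 * X ω 2 ^ 2; P] = 0 :=
    (hindep.comp (φ := fun x => |x|) (ψ := fun x => 3 * x ^ 2) (by fun_prop)
      (by fun_prop)).covariance_eq_zero habs hthird
  have hnorm : (fun ω => 2 * ∑ i, X ω i ^ 2)
      =ᵐ[P] fun ω => (X ω 0 - X ω 1) ^ 2 + 3 * X ω 2 ^ 2 := by
    filter_upwards [hsum] with ω hω
    rw [Fin.sum_univ_three] at hω ⊢
    rw [show X ω 2 = -X ω 0 - X ω 1 by linarith]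
    ring
  rw [← covariance_const_mul_right, covariance_congr_right hnorm,
    covariance_fun_add_right habs (memLp_sq_of_memLp_four hD) hthird, huncorr, add_zero]

lemma eight_mul_covariance_ciSup_sq (hX : IsExchangeable X P) (hneg : IdentDistrib (-X) X P P)
    (hL : MemLp X 4 P) (hsum : ∀ᵐ ω ∂P, ∑ i, X ω i = 0)
    (hindep : IndepFun (fun ω => X ω 0 - X ω 1) (fun ω => X ω 2) P) :
    8 * cov[fun ω => ⨆ i, X ω i, fun ω => X ω 0 ^ 2; P]
      = cov[fun ω => |X ω 0 - X ω 1|, fun ω => (X ω 0 - X ω 1) ^ 2; P] := by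
  have hL2 : MemLp X 2 P := hL.mono_exponent (by norm_num)
  have hsq (i : Fin 3) : MemLp (fun ω => X ω i ^ 2) 2 P := memLp_sq_of_memLp_four (hL.eval i)
  have hcoord : 3 * cov[fun ω => ⨆ i, X ω i, fun ω => X ω 0 ^ 2; P]
      = cov[fun ω => ⨆ i, X ω i, fun ω => ∑ i, X ω i ^ 2; P] := by
    simpa using hX.card_mul_covariance (F := fun x => ⨆ i, x i) (g := fun t => t ^ 2)
      (Measurable.iSup measurable_pi_apply) (fun σ x => σ.iSup_comp) (by fun_prop)
      (memLp_ciSup hL2) hsq 0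
  have hrange : 4 * cov[fun ω => ⨆ i, X ω i, fun ω => ∑ i, X ω i ^ 2; P]
      = 3 * cov[fun ω => |X ω 0 - X ω 1|, fun ω => ∑ i, X ω i ^ 2; P] :=
    four_mul_covariance_ciSup (G := fun x => ∑ i, x i ^ 2) hX hneg hL2 (by fun_prop)
      (fun σ x => Equiv.sum_comp σ fun i => x i ^ 2) (by simp) (memLp_finsetSum _ fun i _ => hsq i)
  linarith [two_mul_covariance_abs_sub_sum_sq hL hsum hindep]

end ThreePoints

section Gaussian

open Matrix

variable {Ω Ω' ι : Type*} [MeasurableSpace Ω] [MeasurableSpace Ω'] [Fintype ι]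
  {P : Measure Ω} {P' : Measure Ω'}

lemma exists_dotProduct_eq_strongDual (L : StrongDual ℝ (ι → ℝ)) :
    ∃ c : ι → ℝ, ∀ x, L x = c ⬝ᵥ x := by
  classical
  have hL := (dotProductEquiv ℝ ι).apply_symm_apply (L : Module.Dual ℝ (ι → ℝ))
  exact ⟨(dotProductEquiv ℝ ι).symm L, fun x => (DFunLike.congr_fun hL x).symm⟩

lemma aemeasurable_of_forall_dotProduct {X : Ω → ι → ℝ}
    (h : ∀ c : ι → ℝ, AEMeasurable (fun ω => c ⬝ᵥ X ω) P) : AEMeasurable X P := by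
  classical
  exact aemeasurable_pi_iff.2 fun i => by simpa using h (Pi.single i 1)

lemma identDistrib_of_forall_dotProduct [IsFiniteMeasure P] [IsFiniteMeasure P'] {X : Ω → ι → ℝ}
    {Y : Ω' → ι → ℝ}
    (h : ∀ c : ι → ℝ, IdentDistrib (fun ω => c ⬝ᵥ X ω) (fun ω => c ⬝ᵥ Y ω) P P') :
    IdentDistrib X Y P P' := by
  have hX : AEMeasurable X P := aemeasurable_of_forall_dotProduct fun c => (h c).aemeasurable_fst
  have hY : AEMeasurable Y P' := aemeasurable_of_forall_dotProduct fun c => (h c).aemeasurable_snd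
  refine ⟨hX, hY, Measure.ext_of_charFunDual (funext fun L => ?_)⟩
  obtain ⟨c, hc⟩ := exists_dotProduct_eq_strongDual L
  have hmap : (P.map X).map L = (P'.map Y).map L := by
    rw [AEMeasurable.map_map_of_aemeasurable (by fun_prop) hX,
      AEMeasurable.map_map_of_aemeasurable (by fun_prop) hY]
    simpa only [Function.comp_def, hc] using (h c).map_eq
  rw [charFunDual_eq_charFun_map_one, charFunDual_eq_charFun_map_one, hmap]

/-- `X` is a centred Gaussian vector with covariance matrix `S`, encoded by the laws of the linear
combinations of its coordinates. -/
def IsCenteredGaussian (X : Ω → ι → ℝ) (S : Matrix ι ι ℝ) (P : Measure Ω) : Prop :=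
  ∀ c : ι → ℝ, HasLaw (fun ω => c ⬝ᵥ X ω) (gaussianReal 0 (c ⬝ᵥ S *ᵥ c).toNNReal) P

namespace IsCenteredGaussian

variable {S : Matrix ι ι ℝ} {X : Ω → ι → ℝ}

lemma hasGaussianLaw (hX : IsCenteredGaussian X S P) : HasGaussianLaw X P where
  isGaussian_map := by
    have hXm : AEMeasurable X P := aemeasurable_of_forall_dotProduct fun c => (hX c).aemeasurable
    refine isGaussian_of_map_eq_gaussianReal fun L => ?_
    obtain ⟨c, hc⟩ := exists_dotProduct_eq_strongDual L
    refine ⟨0, (c ⬝ᵥ S *ᵥ c).toNNReal, ?_⟩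
    rw [AEMeasurable.map_map_of_aemeasurable (by fun_prop) hXm]
    simpa only [Function.comp_def, hc] using (hX c).map_eq

lemma identDistrib {Y : Ω' → ι → ℝ} (hX : IsCenteredGaussian X S P)
    (hY : IsCenteredGaussian Y S P') : IdentDistrib X Y P P' := by
  have := hX.hasGaussianLaw.isProbabilityMeasure
  have := hY.hasGaussianLaw.isProbabilityMeasure
  exact identDistrib_of_forall_dotProduct fun c =>
    ⟨(hX c).aemeasurable, (hY c).aemeasurable, (hX c).map_eq.trans (hY c).map_eq.symm⟩

lemma neg (hX : IsCenteredGaussian X S P) : IsCenteredGaussian (-X) S P := fun c => by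
  simpa [mulVec_neg] using hX (-c)

lemma comp_perm (hX : IsCenteredGaussian X S P) (σ : Equiv.Perm ι) :
    IsCenteredGaussian (fun ω => X ω ∘ σ) (S.submatrix σ σ) P := fun c => by
  simpa only [submatrix_mulVec_equiv, comp_equiv_symm_dotProduct] using hX (c ∘ σ.symm)

lemma isExchangeable (hX : IsCenteredGaussian X S P)
    (hS : ∀ σ : Equiv.Perm ι, S.submatrix σ σ = S) : IsExchangeable X P := fun σ =>
  (hS σ ▸ hX.comp_perm σ).identDistrib hX

lemma dotProduct_ae_eq_zero (hX : IsCenteredGaussian X S P) {c : ι → ℝ}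
    (hc : c ⬝ᵥ S *ᵥ c = 0) : ∀ᵐ ω ∂P, c ⬝ᵥ X ω = 0 := by
  have hlaw := hX c
  rw [hc, Real.toNNReal_zero, gaussianReal_zero_var] at hlaw
  exact hlaw.ae_eq_of_dirac

lemma variance_dotProduct (hX : IsCenteredGaussian X S P) {c : ι → ℝ} (hc : 0 ≤ c ⬝ᵥ S *ᵥ c) :
    Var[fun ω => c ⬝ᵥ X ω; P] = c ⬝ᵥ S *ᵥ c := by
  rw [(hX c).variance_eq, variance_id_gaussianReal, Real.coe_toNNReal _ hc]

end IsCenteredGaussian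

lemma covariance_ciSup_sq_pos {X : Ω → Fin 3 → ℝ} (hgauss : HasGaussianLaw X P)
    (hX : IsExchangeable X P) (hneg : IdentDistrib (-X) X P P)
    (hsum : ∀ᵐ ω ∂P, ∑ i, X ω i = 0) (hvar : Var[fun ω => X ω 0 - X ω 1; P] ≠ 0) :
    0 < cov[fun ω => ⨆ i, X ω i, fun ω => X ω 0 ^ 2; P] := by
  have := hgauss.isProbabilityMeasure
  have hL : MemLp X 4 P := hgauss.memLp (by norm_num)
  have hpair : HasGaussianLaw (fun ω => (X ω 0 - X ω 1, X ω 2)) P :=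
    hgauss.map_fun (((ContinuousLinearMap.proj 0 : (Fin 3 → ℝ) →L[ℝ] ℝ) -
      ContinuousLinearMap.proj 1).prod (ContinuousLinearMap.proj 2))
  have hswap : cov[fun ω => X ω 1, fun ω => X ω 2; P] = cov[fun ω => X ω 0, fun ω => X ω 2; P] :=
    covariance_comp_eq_of_identDistrib (hX (Equiv.swap 0 1)) (f := fun x => x 0)
      (g := fun x => x 2) (by fun_prop) (by fun_prop)
  have hindep : IndepFun (fun ω => X ω 0 - X ω 1) (fun ω => X ω 2) P := by
    refine hpair.indepFun_of_covariance_eq_zero ?_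
    have hL2 (i : Fin 3) : MemLp (fun ω => X ω i) 2 P := hgauss.memLp_two.eval i
    rw [covariance_fun_sub_left (hL2 0) (hL2 1) (hL2 2), hswap, sub_self]
  have hatoms : NullSingletonClass (P.map fun ω => X ω 0 - X ω 1) := by
    rw [hpair.fst.map_eq_gaussianReal]
    refine nullSingletonClass_gaussianReal ?_
    rw [Ne, Real.toNNReal_eq_zero, not_le]
    exact (variance_nonneg _ _).lt_of_ne' hvar
  have hD : MemLp (fun ω => X ω 0 - X ω 1) 3 P := hpair.fst.memLp (by norm_num)
  have hpos := covariance_abs_sq_pos hD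
    (variance_abs_ne_zero (hD.mono_exponent (by norm_num)))
  linarith [eight_mul_covariance_ciSup_sq hX hneg hL hsum hindep]

lemma integral_add_ciSup_pow_three_lt {X : Ω → Fin 3 → ℝ} {W : Ω → ℝ} (hgauss : HasGaussianLaw X P)
    (hX : IsExchangeable X P) (hneg : IdentDistrib (-X) X P P)
    (hsum : ∀ᵐ ω ∂P, ∑ i, X ω i = 0) (hvar : Var[fun ω => X ω 0 - X ω 1; P] ≠ 0)
    (hW : IdentDistrib (fun ω => -X ω 0) W P P) (hindep : IndepFun W X P) :
    ∫ ω, (W ω + ⨆ i, X ω i) ^ 3 ∂P < ∫ ω, ((⨆ i, X ω i) + -X ω 0) ^ 3 ∂P := by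
  have := hgauss.isProbabilityMeasure
  have hsup : Measurable fun x : Fin 3 → ℝ => ⨆ i, x i := Measurable.iSup measurable_pi_apply
  have hL : MemLp X 4 P := hgauss.memLp (by norm_num)
  have hL2 : MemLp X 2 P := hgauss.memLp_two
  have hM : MemLp (fun ω => ⨆ i, X ω i) 4 P := memLp_ciSup hL
  have hWmean : P[W] = 0 := by
    rw [← hW.integral_eq, integral_neg]
    simpa using hX.integral_mul_eq_zero (F := fun _ => 1) measurable_const (fun _ _ => rfl)
      (by simpa using fun i => (hL2.eval i).integrable one_le_two) hsum 0
  have horth : ∫ ω, (⨆ i, X ω i) ^ 2 * X ω 0 ∂P = 0 :=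
    hX.integral_mul_eq_zero (F := fun x => (⨆ i, x i) ^ 2) (hsup.pow_const 2)
      (fun σ x => congrArg (· ^ 2) σ.iSup_comp)
      (fun i => (memLp_sq_of_memLp_four hM).integrable_mul (hL2.eval i)) hsum 0
  have hdiff := integral_add_pow_three_sub_integral_add_pow_three hM (hL.eval 0).neg hW
    (hindep.comp measurable_id hsup) hWmean (by simpa [integral_neg] using horth)
  have hcov := covariance_ciSup_sq_pos hgauss hX hneg hsum hvar
  simp only [Pi.neg_apply, neg_sq] at hdiff
  linarith

end Gaussian

section SumZero

open Matrix

/-- The covariance matrix `[[2, -1, -1], [-1, 2, -1], [-1, -1, 2]]`, written so that its invariance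
under simultaneous permutations of rows and columns is visible. -/
def sumZeroCovariance : Matrix (Fin 3) (Fin 3) ℝ := (3 : ℝ) • 1 - of fun _ _ => 1

lemma sumZeroCovariance_submatrix (σ : Equiv.Perm (Fin 3)) :
    sumZeroCovariance.submatrix σ σ = sumZeroCovariance := by
  ext i j
  simp [sumZeroCovariance, one_apply]

lemma dotProduct_sumZeroCovariance_mulVec (c : Fin 3 → ℝ) :
    c ⬝ᵥ sumZeroCovariance *ᵥ c = 2 * (c 0 ^ 2 + c 1 ^ 2 + c 2 ^ 2)
      - 2 * (c 0 * c 1 + c 0 * c 2 + c 1 * c 2) := by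
  simp only [dotProduct, mulVec, sumZeroCovariance, Matrix.sub_apply, Matrix.smul_apply,
    of_apply, one_apply, smul_eq_mul, Fin.sum_univ_three, Fin.reduceEq, if_true, if_false]
  ring

namespace IsCenteredGaussian

variable {Ω : Type*} [MeasurableSpace Ω] {P : Measure Ω} {X : Ω → Fin 3 → ℝ}

lemma sum_ae_eq_zero (hX : IsCenteredGaussian X sumZeroCovariance P) :
    ∀ᵐ ω ∂P, ∑ i, X ω i = 0 := by
  simpa only [one_dotProduct] using hX.dotProduct_ae_eq_zero (c := 1)
    (by rw [dotProduct_sumZeroCovariance_mulVec]; norm_num)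

lemma variance_sub (hX : IsCenteredGaussian X sumZeroCovariance P) :
    Var[fun ω => X ω 0 - X ω 1; P] = 6 := by
  have hform : ![1, -1, 0] ⬝ᵥ sumZeroCovariance *ᵥ ![1, -1, 0] = 6 := by
    rw [dotProduct_sumZeroCovariance_mulVec]
    norm_num [cons_val_two]
  have hvar := hX.variance_dotProduct (c := ![1, -1, 0]) (by rw [hform]; norm_num)
  rw [hform] at hvar
  simpa [dotProduct, Fin.sum_univ_three, sub_eq_add_neg] using hvar

lemma hasLaw_neg_zero (hX : IsCenteredGaussian X sumZeroCovariance P) :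
    HasLaw (fun ω => -X ω 0) (gaussianReal 0 2) P := by
  have hlaw := hX ![-1, 0, 0]
  rw [dotProduct_sumZeroCovariance_mulVec] at hlaw
  simpa [dotProduct, Fin.sum_univ_three] using hlaw

end IsCenteredGaussian

end SumZero

/-- Example Erock: `E[(max(0, Z₂−Z₁, Z₃−Z₁))³] > E[(W + max(Z₁,Z₂,Z₃))³]`;
in particular `max(0, Z₂−Z₁, Z₃−Z₁) = −Z₁ + max(Z₁,Z₂,Z₃)` and `W + max(Z₁,Z₂,Z₃)` have
different distributions.  Here `W ∼ N(0,2)` is independent of the centered Gaussian vector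
`(Z₁,Z₂,Z₃)` with covariance matrix `[[2,−1,−1],[−1,2,−1],[−1,−1,2]]`. -/
theorem erock_third_moment_gt
    {Ω : Type*} [MeasurableSpace Ω] (P : Measure Ω) [IsProbabilityMeasure P]
    (W Z1 Z2 Z3 : Ω → ℝ)
    (hWm : Measurable W) (hZ1 : Measurable Z1) (hZ2 : Measurable Z2) (hZ3 : Measurable Z3)
    (hW : P.map W = gaussianReal 0 2)
    (hZ : ∀ a b c : ℝ, P.map (fun ω => a * Z1 ω + b * Z2 ω + c * Z3 ω)
        = gaussianReal 0 (Real.toNNReal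
            (2 * (a ^ 2 + b ^ 2 + c ^ 2) - 2 * (a * b + a * c + b * c))))
    (hindep : IndepFun W (fun ω => (Z1 ω, Z2 ω, Z3 ω)) P) :
    (∫ ω, (max 0 (max (Z2 ω - Z1 ω) (Z3 ω - Z1 ω))) ^ 3 ∂P
        > ∫ ω, (W ω + max (Z1 ω) (max (Z2 ω) (Z3 ω))) ^ 3 ∂P) ∧
    P.map (fun ω => max 0 (max (Z2 ω - Z1 ω) (Z3 ω - Z1 ω)))
      ≠ P.map (fun ω => W ω + max (Z1 ω) (max (Z2 ω) (Z3 ω))) := by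
  let X : Ω → Fin 3 → ℝ := fun ω => ![Z1 ω, Z2 ω, Z3 ω]
  have hX : IsCenteredGaussian X sumZeroCovariance P := fun c => by
    rw [dotProduct_sumZeroCovariance_mulVec]
    simp only [dotProduct, Fin.sum_univ_three]
    exact ⟨by fun_prop, hZ (c 0) (c 1) (c 2)⟩
  have hindepX : IndepFun W X P :=
    hindep.comp (ψ := fun z : ℝ × ℝ × ℝ => ![z.1, z.2.1, z.2.2]) measurable_id (by fun_prop)
  have hnegW : IdentDistrib (fun ω => -X ω 0) W P P :=
    ⟨hX.hasLaw_neg_zero.aemeasurable, hWm.aemeasurable, hX.hasLaw_neg_zero.map_eq.trans hW.symm⟩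
  have hsup (ω : Ω) : ⨆ i, X ω i = max (Z1 ω) (max (Z2 ω) (Z3 ω)) := ciSup_fin_three (X ω)
  have hsub (ω : Ω) : (⨆ i, X ω i) + -X ω 0 = max 0 (max (Z2 ω - Z1 ω) (Z3 ω - Z1 ω)) :=
    ciSup_add_neg_zero (X ω)
  have hlt := integral_add_ciSup_pow_three_lt hX.hasGaussianLaw
    (hX.isExchangeable sumZeroCovariance_submatrix) (hX.neg.identDistrib hX)
    hX.sum_ae_eq_zero (by rw [hX.variance_sub]; norm_num) hnegW hindepX
  simp only [hsub] at hlt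
  simp only [hsup] at hlt
  exact ⟨hlt, fun hlaw => hlt.ne'
    (IdentDistrib.mk (by fun_prop) (by fun_prop) hlaw).pow.integral_eq⟩
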